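/- Let m ≥ 10. Let ν(x) = (2π)^{−1/2} e^{−x²/2} be the standard Gaussian density on ℝ, and let π(x) = (1 − e^{−m²/4}) g_m(x) + e^{−m²/4} u_m(x), where g_m(x) = (2π)^{−1/2} e^{−(x−m)²/2} and u_m(x) = e^{−d(x,[−m,2m])²/2} / (3m + √(2π)). For λ ∈ [1/2, 1], let μ_λ be the probability density proportional to ν^{1−λ} π^λ. Then any constant C ≥ 0 such that Var_{μ_λ}(f) ≤ C ∫ (f′)² dμ_λ for all smooth compactly supported f : ℝ → ℝ must satisfy C ≥ (1/(4·10⁴ m)) e^{m²(1−λ)/100} − m². In particular the Poincaré constant of μ_λ is at least (1/(4·10⁴ m)) e^{m²(1−λ)/100} − m². -/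

import Mathlib

open MeasureTheory Real

/-- The standard Gaussian density on ℝ. -/
noncomputable def stdGauss (x : ℝ) : ℝ := Real.exp (-x ^ 2 / 2) / Real.sqrt (2 * Real.pi)

/-- The density of N(m, 1). -/
noncomputable def gaussAt (m x : ℝ) : ℝ := Real.exp (-(x - m) ^ 2 / 2) / Real.sqrt (2 * Real.pi)

/-- The smoothed uniform density on [−m, 2m]:
u_m(x) = e^{−d(x,[−m,2m])²/2}/(3m + √(2π)). -/
noncomputable def smUnif (m x : ℝ) : ℝ :=
  Real.exp (-(Metric.infDist x (Set.Icc (-m) (2 * m))) ^ 2 / 2) / (3 * m + Real.sqrt (2 * Real.pi))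

/-- The unimodal target π = (1 − e^{−m²/4}) N(m,1) + e^{−m²/4} u_m. -/
noncomputable def piDens (m x : ℝ) : ℝ :=
  (1 - Real.exp (-m ^ 2 / 4)) * gaussAt m x + Real.exp (-m ^ 2 / 4) * smUnif m x

/-- The geometric tempering density μ_λ = c_λ ν^{1−λ} π^λ of the standard Gaussian
and the unimodal target. -/
noncomputable def muDens (m lam x : ℝ) : ℝ :=
  stdGauss x ^ (1 - lam) * piDens m x ^ lam
    / ∫ y, stdGauss y ^ (1 - lam) * piDens m y ^ lam

/-!
A bottleneck argument: test the Poincaré inequality on a cutoff equal to `1` on the core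
`|x| ≤ 3m/20` and to `0` on the far region `m/5 ≤ |x|`. Its variance is at least the product of
the masses of the two regions, while its energy is at most `(40/m)²` times the mass of the shell
between them.

For `x ≤ m/5` the Gaussian component of `π` lies below the plateau of the uniform one, so on
`|x| ≤ m/5` the density `μ_λ` agrees, up to a factor `2`, with `h e^{-(1-λ)x²/2}` for a constant
`h`. Hence the core has mass at least `h` and the shell mass at most `(m/5) h e^{-9(1-λ)m²/800}`.
Since `λ ≥ 1/2`, the density is at least `h/2` near its mode `λm`, so the far region has mass at
least `h`; as its complement has mass at most `(4m/5) h`, it even has mass at least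
`1/(1 + 4m/5)`. The factor `h` then cancels.
-/

open ProbabilityTheory Set Filter
open scoped ContDiff

lemma hasDerivAt_integral_sub_add {φ : ℝ → ℝ} (hφ : Continuous φ) (c x : ℝ) :
    HasDerivAt (fun x ↦ ∫ y in (x - c)..(x + c), φ y) (φ (x + c) - φ (x - c)) x := by
  have hint (a b : ℝ) : IntervalIntegrable φ volume a b := hφ.intervalIntegrable a b
  have hprim (z : ℝ) : HasDerivAt (fun z ↦ ∫ y in 0..z, φ y) (φ z) z :=
    intervalIntegral.integral_hasDerivAt_right (hint _ _)
      (hφ.stronglyMeasurableAtFilter _ _) hφ.continuousAt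
  have hsplit (x : ℝ) : ∫ y in (x - c)..(x + c), φ y
      = (∫ y in 0..(x + c), φ y) - ∫ y in 0..(x - c), φ y :=
    (intervalIntegral.integral_interval_sub_left (hint _ _) (hint _ _)).symm
  simp only [hsplit]
  exact ((hprim (x + c)).comp_add_const x c).sub ((hprim (x - c)).comp_sub_const x c)

lemma contDiff_integral_sub_add {φ : ℝ → ℝ} (hφ : ContDiff ℝ ∞ φ) (c : ℝ) :
    ContDiff ℝ ∞ fun x ↦ ∫ y in (x - c)..(x + c), φ y := by
  have hderiv := hasDerivAt_integral_sub_add hφ.continuous c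
  rw [contDiff_infty_iff_deriv, funext fun x ↦ (hderiv x).deriv]
  exact ⟨fun x ↦ (hderiv x).differentiableAt, by fun_prop⟩

-- The cutoff is the indicator of `[-(a + b) / 2, (a + b) / 2]` mollified at scale `(b - a) / 2`.
lemma exists_smooth_cutoff {a b : ℝ} (ha : 0 ≤ a) (hab : a < b) :
    ∃ f : ℝ → ℝ, ContDiff ℝ ∞ f ∧ HasCompactSupport f ∧ (∀ x, |x| ≤ a → f x = 1) ∧
      (∀ x, b ≤ |x| → f x = 0) ∧ ∀ x, |deriv f x| ≤ 2 / (b - a) := by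
  let bump : ContDiffBump (0 : ℝ) := ⟨(b - a) / 4, (b - a) / 2, by linarith, by linarith⟩
  let φ : ℝ → ℝ := bump.normed volume
  have φ_smooth : ContDiff ℝ ∞ φ := bump.contDiff_normed
  have φ_support : Function.support φ = Ioo (-((b - a) / 2)) ((b - a) / 2) := by
    simp [φ, bump, bump.support_normed_eq, Real.ball_eq_Ioo]
  have φ_bound (x : ℝ) : φ x ∈ Icc 0 (2 / (b - a)) := by
    refine ⟨bump.nonneg_normed x, (bump.normed_le_div_measure_closedBall_rIn volume x).trans_eq ?_⟩
    have : 0 < b - a := by linarith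
    rw [Real.volume_real_closedBall bump.rIn_pos.le]
    simp only [bump]
    field_simp
    norm_num
  set c := (a + b) / 2 with hc
  let f : ℝ → ℝ := fun x ↦ ∫ y in (x - c)..(x + c), φ y
  have f_zero (x : ℝ) (hx : b ≤ |x|) : f x = 0 := by
    rw [← intervalIntegral.integral_zero (μ := volume) (a := x - c) (b := x + c)]
    refine intervalIntegral.integral_congr fun y hy ↦ Function.notMem_support.1 fun hy' ↦ ?_
    rw [uIcc_of_le (by linarith)] at hy
    rw [φ_support] at hy'
    rcases le_abs.1 hx with h | h <;> linarith [hy.1, hy.2, hy'.1, hy'.2]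
  refine ⟨f, contDiff_integral_sub_add φ_smooth c,
    HasCompactSupport.of_support_subset_isCompact (isCompact_Icc (a := -b) (b := b)) fun x hx ↦ ?_,
    fun x hx ↦ ?_, f_zero, fun x ↦ ?_⟩
  · exact abs_le.1 (not_le.1 (mt (f_zero x) hx)).le
  · have ⟨hx₁, hx₂⟩ := abs_le.1 hx
    refine (intervalIntegral.integral_eq_integral_of_support_subset ?_).trans bump.integral_normed
    rw [φ_support]
    exact fun y hy ↦ ⟨by linarith [hy.1], by linarith [hy.2]⟩
  · rw [(hasDerivAt_integral_sub_add φ_smooth.continuous c x).deriv]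
    exact (abs_sub_le_of_nonneg_of_le (φ_bound _).1 (φ_bound _).2 (φ_bound _).1 (φ_bound _).2)

lemma sq_sub_mul_measureReal_mul_le_variance {α : Type*} [MeasurableSpace α] {μ : Measure α}
    [IsProbabilityMeasure μ] {f : α → ℝ} (hf : MemLp f 2 μ) {A B : Set α} (hA : MeasurableSet A)
    (hB : MeasurableSet B) (hAB : Disjoint A B) {s t : ℝ} (hs : ∀ x ∈ A, f x = s)
    (ht : ∀ x ∈ B, f x = t) :
    (s - t) ^ 2 * (μ.real A * μ.real B) ≤ Var[f; μ] := by
  set c := μ[f]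
  set p := μ.real A
  set q := μ.real B
  have hint : Integrable (fun x ↦ (f x - c) ^ 2) μ := (hf.sub (memLp_const c)).integrable_sq
  have hpq : p + q ≤ 1 := by
    rw [← measureReal_union hAB hB]
    exact measureReal_le_one
  have hvar : (s - c) ^ 2 * p + (t - c) ^ 2 * q ≤ Var[f; μ] :=
    calc (s - c) ^ 2 * p + (t - c) ^ 2 * q
        = (∫ x in A, (f x - c) ^ 2 ∂μ) + ∫ x in B, (f x - c) ^ 2 ∂μ := by
          rw [setIntegral_congr_fun hA fun x hx ↦ by rw [hs x hx],
            setIntegral_congr_fun hB fun x hx ↦ by rw [ht x hx]]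
          simp [p, q, mul_comm]
      _ = ∫ x in A ∪ B, (f x - c) ^ 2 ∂μ :=
          (setIntegral_union hAB hB hint.integrableOn hint.integrableOn).symm
      _ ≤ ∫ x, (f x - c) ^ 2 ∂μ :=
          setIntegral_le_integral hint (Eventually.of_forall fun x ↦ sq_nonneg _)
      _ = Var[f; μ] := (variance_eq_integral hf.aemeasurable).symm
  calc (s - t) ^ 2 * (p * q)
      = (p + q) * ((s - c) ^ 2 * p + (t - c) ^ 2 * q) - ((s - c) * p + (t - c) * q) ^ 2 := by ring
    _ ≤ (p + q) * Var[f; μ] - 0 := by gcongr; positivity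
    _ ≤ Var[f; μ] := by simpa using mul_le_of_le_one_left (variance_nonneg f μ) hpq

/-- The Poincaré inequality with constant `C` for a measure on `ℝ`, tested on smooth compactly
supported functions. -/
def SatisfiesPoincare (μ : Measure ℝ) (C : ℝ) : Prop :=
  ∀ f : ℝ → ℝ, ContDiff ℝ ∞ f → HasCompactSupport f → Var[f; μ] ≤ C * ∫ x, deriv f x ^ 2 ∂μ

lemma integral_deriv_sq_le {μ : Measure ℝ} [IsFiniteMeasure μ] {f : ℝ → ℝ} {a b r s L : ℝ}
    (hfa : ∀ x, |x| ≤ a → f x = r) (hfb : ∀ x, b ≤ |x| → f x = s)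
    (hL : ∀ x, |deriv f x| ≤ L) :
    ∫ x, deriv f x ^ 2 ∂μ ≤ L ^ 2 * μ.real {x | |x| ∈ Icc a b} := by
  have hmeas : MeasurableSet {x : ℝ | |x| ∈ Icc a b} := measurable_abs measurableSet_Icc
  have hzero (x : ℝ) (hx : |x| ∉ Icc a b) : deriv f x = 0 := by
    rw [mem_Icc, not_and_or, not_le, not_le] at hx
    rcases hx with hx | hx
    · have : f =ᶠ[nhds x] fun _ ↦ r := by
        filter_upwards [continuous_abs.continuousAt.eventually_lt_const hx] with y hy using
          hfa y hy.le
      simp [this.deriv_eq]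
    · have : f =ᶠ[nhds x] fun _ ↦ s := by
        filter_upwards [continuous_abs.continuousAt.eventually_const_lt hx] with y hy using
          hfb y hy.le
      simp [this.deriv_eq]
  calc ∫ x, deriv f x ^ 2 ∂μ ≤ ∫ x, {x | |x| ∈ Icc a b}.indicator (fun _ ↦ L ^ 2) x ∂μ := by
        refine integral_mono_of_nonneg (Eventually.of_forall fun x ↦ sq_nonneg _)
          ((integrable_const _).indicator hmeas) (Eventually.of_forall fun x ↦ ?_)
        by_cases hx : |x| ∈ Icc a b
        · rw [indicator_of_mem (s := {x | |x| ∈ Icc a b}) hx]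
          exact sq_le_sq' (neg_le_of_abs_le (hL x)) (le_of_abs_le (hL x))
        · rw [indicator_of_notMem (s := {x | |x| ∈ Icc a b}) hx]
          simp [hzero x hx]
    _ = L ^ 2 * μ.real {x | |x| ∈ Icc a b} := by
        rw [integral_indicator_const _ hmeas, smul_eq_mul, mul_comm]

theorem SatisfiesPoincare.measureReal_mul_measureReal_le {μ : Measure ℝ} [IsProbabilityMeasure μ]
    {C : ℝ} (h : SatisfiesPoincare μ C) (hC : 0 ≤ C) {a b : ℝ} (ha : 0 ≤ a) (hab : a < b) :
    μ.real {x | |x| ≤ a} * μ.real {x | b ≤ |x|}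
      ≤ C * ((2 / (b - a)) ^ 2 * μ.real {x | |x| ∈ Icc a b}) := by
  obtain ⟨f, f_smooth, f_supp, f_one, f_zero, f_deriv⟩ := exists_smooth_cutoff ha hab
  have hdisj : Disjoint {x : ℝ | |x| ≤ a} {x | b ≤ |x|} :=
    disjoint_left.2 fun x (hxa : |x| ≤ a) (hxb : b ≤ |x|) ↦ by linarith
  calc μ.real {x | |x| ≤ a} * μ.real {x | b ≤ |x|} ≤ Var[f; μ] := by
        simpa using sq_sub_mul_measureReal_mul_le_variance
          (A := {x | |x| ≤ a}) (B := {x | b ≤ |x|})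
          (f_smooth.continuous.memLp_of_hasCompactSupport f_supp) (measurable_abs measurableSet_Iic)
          (measurable_abs measurableSet_Ici) hdisj f_one f_zero
    _ ≤ C * ∫ x, deriv f x ^ 2 ∂μ := h f f_smooth f_supp
    _ ≤ C * ((2 / (b - a)) ^ 2 * μ.real {x | |x| ∈ Icc a b}) := by
        gcongr
        exact integral_deriv_sq_le f_one f_zero f_deriv

lemma integrable_rpow_one_sub_mul_rpow {α : Type*} [MeasurableSpace α] {μ : Measure α}
    {p q : α → ℝ} (hp : Integrable p μ) (hq : Integrable q μ) (hp₀ : 0 ≤ p) (hq₀ : 0 ≤ q) {t : ℝ}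
    (ht : t ∈ Icc 0 1) : Integrable (fun x ↦ p x ^ (1 - t) * q x ^ t) μ := by
  refine ((hp.const_mul (1 - t)).add (hq.const_mul t)).mono'
    ((hp.aemeasurable.pow_const _).mul (hq.aemeasurable.pow_const _)).aestronglyMeasurable
    (Eventually.of_forall fun x ↦ ?_)
  rw [Real.norm_of_nonneg (mul_nonneg (rpow_nonneg (hp₀ x) _) (rpow_nonneg (hq₀ x) _))]
  exact geom_mean_le_arith_mean2_weighted (sub_nonneg.2 ht.2) ht.1 (hp₀ x) (hq₀ x) (by ring)

lemma integrable_exp_neg_infDist_sq_div_two {s : Set ℝ} (hs : Bornology.IsBounded s)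
    (hne : s.Nonempty) : Integrable fun x : ℝ ↦ exp (-Metric.infDist x s ^ 2 / 2) := by
  obtain ⟨y, hy⟩ := hne
  have hgauss := (integrable_exp_neg_mul_sq (b := 1 / 4) (by norm_num)).comp_sub_right y
  have hcont : Continuous fun x : ℝ ↦ exp (-Metric.infDist x s ^ 2 / 2) := by
    have := Metric.continuous_infDist_pt s
    fun_prop
  refine (hgauss.const_mul (exp (Metric.diam s ^ 2 / 2))).mono' hcont.aestronglyMeasurable
    (Eventually.of_forall fun x ↦ ?_)
  have hdist : |x - y| ≤ Metric.infDist x s + Metric.diam s :=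
    Metric.dist_le_infDist_add_diam hs hy
  rw [Real.norm_of_nonneg (exp_pos _).le, ← exp_add, exp_le_exp]
  have hsq : (x - y) ^ 2 ≤ (Metric.infDist x s + Metric.diam s) ^ 2 :=
    sq_le_sq' (neg_le_of_abs_le hdist) (le_of_abs_le hdist)
  nlinarith [sq_nonneg (Metric.infDist x s - Metric.diam s)]

lemma integral_withDensity_ofReal {α : Type*} [MeasurableSpace α] {μ : Measure α} {ρ : α → ℝ}
    (hρ : AEMeasurable ρ μ) (hρ₀ : 0 ≤ ρ) (f : α → ℝ) :
    ∫ x, f x ∂μ.withDensity (fun x ↦ ENNReal.ofReal (ρ x)) = ∫ x, f x * ρ x ∂μ := by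
  rw [integral_withDensity_eq_integral_toReal_smul₀ hρ.ennreal_ofReal (by simp)]
  simp [ENNReal.toReal_ofReal (hρ₀ _), mul_comm]

lemma measureReal_withDensity_ofReal {α : Type*} [MeasurableSpace α] {μ : Measure α} {ρ : α → ℝ}
    (hρ : Integrable ρ μ) (hρ₀ : 0 ≤ ρ) {s : Set α} (hs : MeasurableSet s) :
    (μ.withDensity fun x ↦ ENNReal.ofReal (ρ x)).real s = ∫ x in s, ρ x ∂μ := by
  rw [measureReal_def, withDensity_apply _ hs, ← ofReal_integral_eq_lintegral_ofReal
    hρ.integrableOn (Eventually.of_forall hρ₀), ENNReal.toReal_ofReal (integral_nonneg hρ₀)]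

lemma setOf_abs_mem_Icc_subset (a b : ℝ) :
    {x : ℝ | |x| ∈ Icc a b} ⊆ Icc (-b) (-a) ∪ Icc a b := by
  rintro x ⟨hax, hxb⟩
  rcases abs_cases x with ⟨hx, -⟩ | ⟨hx, -⟩ <;> rw [hx] at hax hxb
  · exact Or.inr ⟨hax, hxb⟩
  · exact Or.inl ⟨by linarith, by linarith⟩

lemma volume_setOf_abs_mem_Icc_lt_top (a b : ℝ) : volume {x : ℝ | |x| ∈ Icc a b} < ⊤ :=
  (measure_mono (setOf_abs_mem_Icc_subset a b)).trans_lt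
    (measure_union_lt_top measure_Icc_lt_top measure_Icc_lt_top)

lemma volume_real_setOf_abs_mem_Icc_le {a b : ℝ} (hab : a ≤ b) :
    volume.real {x : ℝ | |x| ∈ Icc a b} ≤ 2 * (b - a) :=
  calc volume.real {x : ℝ | |x| ∈ Icc a b}
      ≤ volume.real (Icc (-b) (-a) ∪ Icc a b) := measureReal_mono (setOf_abs_mem_Icc_subset a b)
        (measure_union_lt_top measure_Icc_lt_top measure_Icc_lt_top).ne
    _ ≤ volume.real (Icc (-b) (-a)) + volume.real (Icc a b) := measureReal_union_le _ _
    _ = 2 * (b - a) := by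
        rw [Real.volume_real_Icc_of_le (by linarith), Real.volume_real_Icc_of_le hab]
        ring

lemma stdGauss_pos (x : ℝ) : 0 < stdGauss x := by
  unfold stdGauss; positivity

lemma gaussAt_pos (m x : ℝ) : 0 < gaussAt m x := by
  unfold gaussAt; positivity

lemma integrable_stdGauss : Integrable stdGauss := by
  have h := integrable_exp_neg_mul_sq (b := 1 / 2) (by norm_num)
  exact (h.congr (Eventually.of_forall fun x ↦ by ring_nf)).div_const (√(2 * π))

lemma integrable_gaussAt (m : ℝ) : Integrable (gaussAt m) :=
  integrable_stdGauss.comp_sub_right m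

lemma stdGauss_rpow (x t : ℝ) : stdGauss x ^ t = stdGauss 0 ^ t * exp (-t * x ^ 2 / 2) := by
  have hsplit : stdGauss x = stdGauss 0 * exp (-x ^ 2 / 2) := by simp [stdGauss]; ring
  rw [hsplit, mul_rpow (stdGauss_pos 0).le (exp_pos _).le, ← exp_mul]
  ring_nf

/-- The height `e^{-m²/4} / (3m + √(2π))` of the flat part, on `[-m, 2m]`, of the uniform component
of `π`. -/
noncomputable def plateau (m : ℝ) : ℝ := exp (-m ^ 2 / 4) / (3 * m + √(2 * π))

/-- The unnormalised geometric tempering `ν^{1-λ} π^λ`. -/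
noncomputable def tempWeight (m lam x : ℝ) : ℝ := stdGauss x ^ (1 - lam) * piDens m x ^ lam

/-- The value that `μ_λ` would take at the origin if `π` were reduced there to its plateau: the
common scale of the density estimates. -/
noncomputable def muPlateau (m lam : ℝ) : ℝ :=
  stdGauss 0 ^ (1 - lam) * plateau m ^ lam / ∫ x, tempWeight m lam x

/-- The geometric tempering `μ_λ` as a measure. -/
noncomputable def temperedMeasure (m lam : ℝ) : Measure ℝ :=
  volume.withDensity fun x ↦ ENNReal.ofReal (muDens m lam x)

section Densities

variable {m lam x : ℝ}

lemma plateau_pos (hm : 0 ≤ m) : 0 < plateau m := by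
  unfold plateau; positivity

lemma smUnif_pos (hm : 0 ≤ m) (x : ℝ) : 0 < smUnif m x := by
  unfold smUnif; positivity

lemma integrable_smUnif (hm : 0 ≤ m) : Integrable (smUnif m) :=
  (integrable_exp_neg_infDist_sq_div_two (Metric.isBounded_Icc (-m) (2 * m))
    (nonempty_Icc.2 (by linarith))).div_const _

lemma exp_mul_smUnif_le_plateau (hm : 0 ≤ m) (x : ℝ) :
    exp (-m ^ 2 / 4) * smUnif m x ≤ plateau m := by
  have hexp : exp (-Metric.infDist x (Icc (-m) (2 * m)) ^ 2 / 2) ≤ 1 :=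
    exp_le_one_iff.2 (by nlinarith [sq_nonneg (Metric.infDist x (Icc (-m) (2 * m)))])
  rw [smUnif, plateau, ← mul_div_assoc]
  gcongr
  exact mul_le_of_le_one_right (exp_pos _).le hexp

lemma exp_mul_smUnif_eq_plateau (hx : x ∈ Icc (-m) (2 * m)) :
    exp (-m ^ 2 / 4) * smUnif m x = plateau m := by
  simp [smUnif, plateau, Metric.infDist_zero_of_mem hx, div_eq_mul_inv]

lemma exp_neg_sq_div_four_le_one (m : ℝ) : exp (-m ^ 2 / 4) ≤ 1 :=
  exp_le_one_iff.2 (by nlinarith [sq_nonneg m])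

lemma piDens_pos (hm : 0 ≤ m) (x : ℝ) : 0 < piDens m x :=
  add_pos_of_nonneg_of_pos
    (mul_nonneg (sub_nonneg.2 (exp_neg_sq_div_four_le_one m)) (gaussAt_pos m x).le)
    (mul_pos (exp_pos _) (smUnif_pos hm x))

lemma integrable_piDens (hm : 0 ≤ m) : Integrable (piDens m) :=
  ((integrable_gaussAt m).const_mul _).add ((integrable_smUnif hm).const_mul _)

lemma gaussAt_le_plateau (hm : 10 ≤ m) (hx : x ≤ m / 5) : gaussAt m x ≤ plateau m := by
  have hsqrt : 2 ≤ √(2 * π) := le_sqrt_of_sq_le (by nlinarith [pi_gt_three])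
  have hexponent : -(x - m) ^ 2 / 2 + 7 / 100 * m ^ 2 ≤ -m ^ 2 / 4 := by nlinarith
  have hlinear : 1 + 3 / 2 * m ≤ exp (7 / 100 * m ^ 2) := by
    have := quadratic_le_exp_of_nonneg (x := 7 / 100 * m ^ 2) (by positivity)
    nlinarith [mul_le_mul_of_nonneg_left hm (by linarith : 0 ≤ m)]
  rw [gaussAt, plateau, div_le_div_iff₀ (by positivity) (by positivity)]
  calc exp (-(x - m) ^ 2 / 2) * (3 * m + √(2 * π))
      ≤ exp (-(x - m) ^ 2 / 2) * ((1 + 3 / 2 * m) * √(2 * π)) := by gcongr; nlinarith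
    _ ≤ exp (-(x - m) ^ 2 / 2) * (exp (7 / 100 * m ^ 2) * √(2 * π)) := by gcongr
    _ = exp (-(x - m) ^ 2 / 2 + 7 / 100 * m ^ 2) * √(2 * π) := by rw [exp_add]; ring
    _ ≤ exp (-m ^ 2 / 4) * √(2 * π) := by gcongr

lemma piDens_le_two_mul_plateau (hm : 10 ≤ m) (hx : x ≤ m / 5) : piDens m x ≤ 2 * plateau m := by
  have hgauss : (1 - exp (-m ^ 2 / 4)) * gaussAt m x ≤ gaussAt m x :=
    mul_le_of_le_one_left (gaussAt_pos m x).le (by linarith [exp_pos (-m ^ 2 / 4)])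
  have hunif := exp_mul_smUnif_le_plateau (by linarith : 0 ≤ m) x
  rw [piDens]
  linarith [gaussAt_le_plateau hm hx]

lemma plateau_le_piDens (hx : x ∈ Icc (-m) (2 * m)) : plateau m ≤ piDens m x := by
  rw [piDens, exp_mul_smUnif_eq_plateau hx, le_add_iff_nonneg_left]
  exact mul_nonneg (sub_nonneg.2 (exp_neg_sq_div_four_le_one m)) (gaussAt_pos m x).le

lemma plateau_mul_exp_le_piDens (hm : 2 ≤ m) (x : ℝ) :
    plateau m * exp (m ^ 2 / 4 - (x - m) ^ 2 / 2) ≤ piDens m x := by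
  have hmass : exp (-m ^ 2 / 4) ≤ 1 / 2 := by
    have h := exp_le_exp.2 (by nlinarith : -m ^ 2 / 4 ≤ -1)
    linarith [exp_neg_one_lt_half]
  have hsqrt : √(2 * π) ≤ 3 * m := sqrt_le_iff.2 ⟨by linarith, by nlinarith [pi_lt_four]⟩
  calc plateau m * exp (m ^ 2 / 4 - (x - m) ^ 2 / 2)
      = exp (-(x - m) ^ 2 / 2) / (3 * m + √(2 * π)) := by
        rw [plateau, div_mul_eq_mul_div, ← exp_add]
        ring_nf
    _ ≤ exp (-(x - m) ^ 2 / 2) / (2 * √(2 * π)) := by gcongr; linarith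
    _ = 1 / 2 * gaussAt m x := by rw [gaussAt]; ring
    _ ≤ (1 - exp (-m ^ 2 / 4)) * gaussAt m x := by
        gcongr
        · exact (gaussAt_pos m x).le
        · linarith
    _ ≤ piDens m x :=
        le_add_of_nonneg_right (mul_nonneg (exp_pos _).le (smUnif_pos (by linarith) x).le)

lemma tempWeight_eq (m lam x : ℝ) : tempWeight m lam x
    = stdGauss 0 ^ (1 - lam) * (exp (-(1 - lam) * x ^ 2 / 2) * piDens m x ^ lam) := by
  rw [tempWeight, stdGauss_rpow, mul_assoc]

lemma tempWeight_pos (hm : 0 ≤ m) (lam x : ℝ) : 0 < tempWeight m lam x :=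
  mul_pos (rpow_pos_of_pos (stdGauss_pos x) _) (rpow_pos_of_pos (piDens_pos hm x) _)

lemma integrable_tempWeight (hm : 0 ≤ m) (hlam : lam ∈ Icc 0 1) :
    Integrable (tempWeight m lam) :=
  integrable_rpow_one_sub_mul_rpow integrable_stdGauss (integrable_piDens hm)
    (fun x ↦ (stdGauss_pos x).le) (fun x ↦ (piDens_pos hm x).le) hlam

lemma integral_tempWeight_pos (hm : 0 ≤ m) (hlam : lam ∈ Icc 0 1) :
    0 < ∫ x, tempWeight m lam x := by
  have hsupp : Function.support (tempWeight m lam) = univ :=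
    eq_univ_of_forall fun x ↦ (tempWeight_pos hm lam x).ne'
  rw [integral_pos_iff_support_of_nonneg (fun x ↦ (tempWeight_pos hm lam x).le)
    (integrable_tempWeight hm hlam), hsupp]
  simp

lemma muDens_nonneg (hm : 0 ≤ m) (lam : ℝ) : 0 ≤ muDens m lam := fun x ↦
  div_nonneg (tempWeight_pos hm lam x).le (integral_nonneg fun y ↦ (tempWeight_pos hm lam y).le)

lemma integrable_muDens (hm : 0 ≤ m) (hlam : lam ∈ Icc 0 1) : Integrable (muDens m lam) :=
  (integrable_tempWeight hm hlam).div_const _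

lemma integral_muDens (hm : 0 ≤ m) (hlam : lam ∈ Icc 0 1) : ∫ x, muDens m lam x = 1 :=
  (integral_div _ _).trans (div_self (integral_tempWeight_pos hm hlam).ne')

lemma muPlateau_pos (hm : 0 ≤ m) (hlam : lam ∈ Icc 0 1) : 0 < muPlateau m lam :=
  div_pos (mul_pos (rpow_pos_of_pos (stdGauss_pos 0) _) (rpow_pos_of_pos (plateau_pos hm) _))
    (integral_tempWeight_pos hm hlam)

lemma muDens_le (hm : 10 ≤ m) (hlam : lam ∈ Icc 0 1) (hx : x ≤ m / 5) :
    muDens m lam x ≤ 2 * exp (-(1 - lam) * x ^ 2 / 2) * muPlateau m lam := by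
  have hm₀ : 0 ≤ m := by linarith
  have hpi : piDens m x ^ lam ≤ 2 * plateau m ^ lam :=
    calc piDens m x ^ lam ≤ (2 * plateau m) ^ lam :=
          rpow_le_rpow (piDens_pos hm₀ x).le (piDens_le_two_mul_plateau hm hx) hlam.1
      _ = 2 ^ lam * plateau m ^ lam := mul_rpow zero_le_two (plateau_pos hm₀).le
      _ ≤ 2 * plateau m ^ lam := by
          gcongr
          · exact rpow_nonneg (plateau_pos hm₀).le _
          · exact rpow_le_self_of_one_le one_le_two hlam.2
  calc muDens m lam x = tempWeight m lam x / ∫ y, tempWeight m lam y := rfl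
    _ ≤ stdGauss 0 ^ (1 - lam) * (exp (-(1 - lam) * x ^ 2 / 2) * (2 * plateau m ^ lam))
          / ∫ y, tempWeight m lam y := by
        rw [tempWeight_eq]
        have := (integral_tempWeight_pos hm₀ hlam).le
        have := rpow_nonneg (stdGauss_pos 0).le (1 - lam)
        gcongr
    _ = 2 * exp (-(1 - lam) * x ^ 2 / 2) * muPlateau m lam := by rw [muPlateau]; ring

lemma muPlateau_div_two_le_muDens (hm : 0 ≤ m) (hlam : lam ∈ Icc 0 1) {t : ℝ}
    (hpi : plateau m * exp t ≤ piDens m x) (ht : (1 - lam) * x ^ 2 / 2 ≤ lam * t + 1 / 2) :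
    muPlateau m lam / 2 ≤ muDens m lam x := by
  have hweight : 1 / 2 * plateau m ^ lam ≤ exp (-(1 - lam) * x ^ 2 / 2) * piDens m x ^ lam :=
    calc 1 / 2 * plateau m ^ lam
        ≤ exp (-(1 - lam) * x ^ 2 / 2 + t * lam) * plateau m ^ lam := by
          have hexp := add_one_le_exp (-(1 - lam) * x ^ 2 / 2 + t * lam)
          have := rpow_nonneg (plateau_pos hm).le lam
          gcongr
          linarith
      _ = exp (-(1 - lam) * x ^ 2 / 2) * (plateau m * exp t) ^ lam := by
          rw [mul_rpow (plateau_pos hm).le (exp_pos t).le, ← exp_mul, exp_add]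
          ring
      _ ≤ exp (-(1 - lam) * x ^ 2 / 2) * piDens m x ^ lam := by
          have := (plateau_pos hm).le
          have := hlam.1
          gcongr
  calc muPlateau m lam / 2
      = stdGauss 0 ^ (1 - lam) * (1 / 2 * plateau m ^ lam) / ∫ y, tempWeight m lam y := by
        rw [muPlateau]; ring
    _ ≤ tempWeight m lam x / ∫ y, tempWeight m lam y := by
        rw [tempWeight_eq]
        have := (integral_tempWeight_pos hm hlam).le
        have := rpow_nonneg (stdGauss_pos 0).le (1 - lam)
        gcongr
    _ = muDens m lam x := rfl

lemma muPlateau_div_two_le_muDens_of_abs_le (hm : 1 ≤ m) (hlam : lam ∈ Icc 0 1) (hx : |x| ≤ 1) :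
    muPlateau m lam / 2 ≤ muDens m lam x := by
  have ⟨hx₁, hx₂⟩ := abs_le.1 hx
  refine muPlateau_div_two_le_muDens (by linarith) hlam (t := 0) ?_ ?_
  · simpa using plateau_le_piDens ⟨by linarith, by linarith⟩
  · nlinarith [hlam.1, hlam.2, sq_nonneg x]

lemma muPlateau_div_two_le_muDens_of_abs_sub_le (hm : 2 ≤ m) (hlam : lam ∈ Icc (1 / 2) 1)
    (hx : |x - lam * m| ≤ 1) : muPlateau m lam / 2 ≤ muDens m lam x := by
  obtain ⟨hlam₀, hlam₁⟩ := hlam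
  refine muPlateau_div_two_le_muDens (by linarith) ⟨by linarith, hlam₁⟩
    (plateau_mul_exp_le_piDens hm x) ?_
  have hsquare : (1 - lam) * x ^ 2 / 2 = lam * (m ^ 2 / 4 - (x - m) ^ 2 / 2)
      + (x - lam * m) ^ 2 / 2 - lam * (2 * lam - 1) * m ^ 2 / 4 := by ring
  have hnonneg : 0 ≤ lam * (2 * lam - 1) * m ^ 2 :=
    mul_nonneg (mul_nonneg (by linarith) (by linarith)) (sq_nonneg m)
  rw [hsquare]
  linarith [(sq_le_one_iff_abs_le_one _).2 hx]

end Densities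

section TemperedMeasure

variable {m lam : ℝ}

lemma integral_temperedMeasure (hm : 0 ≤ m) (hlam : lam ∈ Icc 0 1) (f : ℝ → ℝ) :
    ∫ x, f x ∂temperedMeasure m lam = ∫ x, f x * muDens m lam x :=
  integral_withDensity_ofReal (integrable_muDens hm hlam).aemeasurable (muDens_nonneg hm lam) f

lemma measureReal_temperedMeasure (hm : 0 ≤ m) (hlam : lam ∈ Icc 0 1) {s : Set ℝ}
    (hs : MeasurableSet s) : (temperedMeasure m lam).real s = ∫ x in s, muDens m lam x :=
  measureReal_withDensity_ofReal (integrable_muDens hm hlam) (muDens_nonneg hm lam) hs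

lemma isProbabilityMeasure_temperedMeasure (hm : 0 ≤ m) (hlam : lam ∈ Icc 0 1) :
    IsProbabilityMeasure (temperedMeasure m lam) := by
  rw [isProbabilityMeasure_iff_real, measureReal_temperedMeasure hm hlam .univ, setIntegral_univ,
    integral_muDens hm hlam]

lemma satisfiesPoincare_temperedMeasure_iff (hm : 0 ≤ m) (hlam : lam ∈ Icc 0 1) {C : ℝ} :
    SatisfiesPoincare (temperedMeasure m lam) C ↔
      ∀ f : ℝ → ℝ, ContDiff ℝ (⊤ : ℕ∞) f → HasCompactSupport f →
        (∫ x, f x ^ 2 * muDens m lam x) - (∫ x, f x * muDens m lam x) ^ 2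
          ≤ C * ∫ x, deriv f x ^ 2 * muDens m lam x := by
  have := isProbabilityMeasure_temperedMeasure hm hlam
  refine forall_congr' fun f ↦ forall₂_congr fun hf hsupp ↦ ?_
  rw [variance_eq_sub (hf.continuous.memLp_of_hasCompactSupport hsupp)]
  simp only [Pi.pow_apply, integral_temperedMeasure hm hlam]

lemma muPlateau_le_measureReal_Icc (hm : 0 ≤ m) (hlam : lam ∈ Icc 0 1) {c : ℝ}
    (h : ∀ x, |x - c| ≤ 1 → muPlateau m lam / 2 ≤ muDens m lam x) :
    muPlateau m lam ≤ (temperedMeasure m lam).real (Icc (c - 1) (c + 1)) := by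
  rw [measureReal_temperedMeasure hm hlam measurableSet_Icc]
  have hbound (x : ℝ) (hx : x ∈ Icc (c - 1) (c + 1)) : muPlateau m lam / 2 ≤ muDens m lam x :=
    h x (abs_le.2 ⟨by linarith [hx.1], by linarith [hx.2]⟩)
  have hint := setIntegral_ge_of_const_le_real measurableSet_Icc measure_Icc_lt_top.ne hbound
    (integrable_muDens hm hlam).integrableOn
  rw [Real.volume_real_Icc_of_le (by linarith)] at hint
  linarith

lemma measureReal_abs_mem_Icc_le (hm : 10 ≤ m) (hlam : lam ∈ Icc 0 1) {a b : ℝ} (ha : 0 ≤ a)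
    (hab : a ≤ b) (hb : b ≤ m / 5) :
    (temperedMeasure m lam).real {x | |x| ∈ Icc a b}
      ≤ 4 * (b - a) * exp (-(1 - lam) * a ^ 2 / 2) * muPlateau m lam := by
  have hm₀ : 0 ≤ m := by linarith
  have hplateau := (muPlateau_pos hm₀ hlam).le
  set K := 2 * exp (-(1 - lam) * a ^ 2 / 2) * muPlateau m lam with hK
  have hbound (x : ℝ) (hx : |x| ∈ Icc a b) : ‖muDens m lam x‖ ≤ K := by
    have hsq : a ^ 2 ≤ x ^ 2 := sq_abs x ▸ pow_le_pow_left₀ ha hx.1 2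
    have hexponent : -(1 - lam) * x ^ 2 / 2 ≤ -(1 - lam) * a ^ 2 / 2 := by
      nlinarith [hlam.2]
    rw [Real.norm_of_nonneg (muDens_nonneg hm₀ lam x), hK]
    exact (muDens_le hm hlam ((le_abs_self x).trans (hx.2.trans hb))).trans (by gcongr)
  calc (temperedMeasure m lam).real {x | |x| ∈ Icc a b}
      = ∫ x in {x | |x| ∈ Icc a b}, muDens m lam x :=
        measureReal_temperedMeasure hm₀ hlam (measurable_abs measurableSet_Icc)
    _ ≤ K * volume.real {x : ℝ | |x| ∈ Icc a b} := (le_norm_self _).trans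
        (norm_setIntegral_le_of_norm_le_const (volume_setOf_abs_mem_Icc_lt_top a b) hbound)
    _ ≤ K * (2 * (b - a)) := by gcongr; exact volume_real_setOf_abs_mem_Icc_le hab
    _ = 4 * (b - a) * exp (-(1 - lam) * a ^ 2 / 2) * muPlateau m lam := by rw [hK]; ring

lemma muPlateau_le_measureReal_abs_le (hm : 1 ≤ m) (hlam : lam ∈ Icc 0 1) {a : ℝ} (ha : 1 ≤ a) :
    muPlateau m lam ≤ (temperedMeasure m lam).real {x | |x| ≤ a} := by
  have hm₀ : 0 ≤ m := by linarith
  have := isProbabilityMeasure_temperedMeasure hm₀ hlam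
  refine (muPlateau_le_measureReal_Icc hm₀ hlam (c := 0) fun x hx ↦ ?_).trans
    (measureReal_mono fun x hx ↦ ?_)
  · exact muPlateau_div_two_le_muDens_of_abs_le hm hlam (by simpa using hx)
  · exact (abs_le.2 (by simpa using hx)).trans ha

lemma one_le_mul_measureReal_le_abs (hm : 10 ≤ m) (hlam : lam ∈ Icc (1 / 2) 1) :
    1 ≤ (1 + 4 * m / 5) * (temperedMeasure m lam).real {x | m / 5 ≤ |x|} := by
  have hm₀ : 0 ≤ m := by linarith
  have hlam' : lam ∈ Icc 0 1 := ⟨by linarith [hlam.1], hlam.2⟩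
  have := isProbabilityMeasure_temperedMeasure hm₀ hlam'
  have hball : (temperedMeasure m lam).real {x | |x| ∈ Icc 0 (m / 5)}
      ≤ 4 * m / 5 * muPlateau m lam :=
    (measureReal_abs_mem_Icc_le hm hlam' le_rfl (by linarith) le_rfl).trans_eq (by
      simp only [ne_eq, OfNat.ofNat_ne_zero, not_false_eq_true, zero_pow, mul_zero, zero_div,
        exp_zero]
      ring)
  have hmode : muPlateau m lam ≤ (temperedMeasure m lam).real {x | m / 5 ≤ |x|} := by
    refine (muPlateau_le_measureReal_Icc hm₀ hlam' (c := lam * m) fun x hx ↦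
      muPlateau_div_two_le_muDens_of_abs_sub_le (by linarith) hlam hx).trans
      (measureReal_mono fun x hx ↦ ?_)
    have : 1 / 2 * m ≤ lam * m := by gcongr; exact hlam.1
    exact (by linarith [hx.1] : m / 5 ≤ x).trans (le_abs_self x)
  have hcover : {x : ℝ | |x| ∈ Icc 0 (m / 5)} ∪ {x | m / 5 ≤ |x|} = univ :=
    eq_univ_of_forall fun x ↦ (le_total |x| (m / 5)).imp (fun h ↦ ⟨abs_nonneg x, h⟩) id
  have htotal := measureReal_union_le (μ := temperedMeasure m lam)
    {x : ℝ | |x| ∈ Icc 0 (m / 5)} {x | m / 5 ≤ |x|}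
  rw [hcover, probReal_univ] at htotal
  have : 4 * m / 5 * muPlateau m lam
      ≤ 4 * m / 5 * (temperedMeasure m lam).real {x | m / 5 ≤ |x|} := by gcongr
  linarith

end TemperedMeasure

theorem geometric_tempering_poincare_lower_bound_general
    (m lam : ℝ) (hm : 10 ≤ m) (hlam : lam ∈ Icc (1 / 2 : ℝ) 1) (C : ℝ) (hC : 0 ≤ C)
    (hpoinc : SatisfiesPoincare (temperedMeasure m lam) C) :
    exp (9 / 800 * (1 - lam) * m ^ 2) ≤ 288 * C := by
  have hm₀ : 0 ≤ m := by linarith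
  have hlam' : lam ∈ Icc 0 1 := ⟨by linarith [hlam.1], hlam.2⟩
  have := isProbabilityMeasure_temperedMeasure hm₀ hlam'
  set h := muPlateau m lam
  set E := exp (9 / 800 * (1 - lam) * m ^ 2)
  have hE : exp (-(1 - lam) * (3 * m / 20) ^ 2 / 2) = E⁻¹ := by rw [← exp_neg]; ring_nf
  have hE₀ : 0 < E := exp_pos _
  have hh₀ : 0 < h := muPlateau_pos hm₀ hlam'
  set ball := (temperedMeasure m lam).real {x | |x| ≤ 3 * m / 20}
  set tail := (temperedMeasure m lam).real {x | m / 5 ≤ |x|}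
  have hball : h ≤ ball := muPlateau_le_measureReal_abs_le (by linarith) hlam' (by linarith)
  have htail : 1 ≤ (1 + 4 * m / 5) * tail := one_le_mul_measureReal_le_abs hm hlam
  have hshell : (temperedMeasure m lam).real {x | |x| ∈ Icc (3 * m / 20) (m / 5)}
      ≤ m / 5 * E⁻¹ * h :=
    (measureReal_abs_mem_Icc_le hm hlam' (by linarith) (by linarith) le_rfl).trans_eq
      (by rw [hE]; ring)
  have hbottleneck : ball * tail ≤ C * ((2 / (m / 5 - 3 * m / 20)) ^ 2 * (m / 5 * E⁻¹ * h)) :=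
    (hpoinc.measureReal_mul_measureReal_le hC (by linarith) (by linarith)).trans (by gcongr)
  have hcancel : E * h ≤ 288 * C * h :=
    calc E * h ≤ E * ball * ((1 + 4 * m / 5) * tail) := by
          rw [← mul_one (E * h)]; gcongr
      _ = E * (1 + 4 * m / 5) * (ball * tail) := by ring
      _ ≤ E * (1 + 4 * m / 5)
            * (C * ((2 / (m / 5 - 3 * m / 20)) ^ 2 * (m / 5 * E⁻¹ * h))) := by gcongr
      _ = (320 / m + 256) * C * h := by field_simp; ring
      _ ≤ 288 * C * h := by
        have : 320 / m ≤ 32 := (div_le_iff₀ (by linarith)).2 (by linarith)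
        gcongr
        linarith
  exact le_of_mul_le_mul_right hcancel hh₀

/-- For m ≥ 10, ν = N(0,1) and π = (1−e^{−m²/4})N(m,1) + e^{−m²/4}u_m,
every Poincaré constant C of the geometric tempering μ_λ with λ ∈ [1/2, 1] satisfies
C ≥ (1/(4·10⁴m)) e^{m²(1−λ)/100} − m². -/
theorem geometric_tempering_poincare_lower_bound
    (m lam : ℝ) (hm : 10 ≤ m) (hlam : lam ∈ Set.Icc (1 / 2 : ℝ) 1)
    (C : ℝ) (hC : 0 ≤ C)
    (hpoinc : ∀ f : ℝ → ℝ, ContDiff ℝ (⊤ : ℕ∞) f → HasCompactSupport f →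
      (∫ x, (f x) ^ 2 * muDens m lam x) - (∫ x, f x * muDens m lam x) ^ 2
        ≤ C * ∫ x, (deriv f x) ^ 2 * muDens m lam x) :
    1 / (4 * 10 ^ 4 * m) * Real.exp (m ^ 2 * (1 - lam) / 100) - m ^ 2 ≤ C := by
  have hlam' : lam ∈ Set.Icc 0 1 := ⟨by linarith [hlam.1], hlam.2⟩
  have hexp := geometric_tempering_poincare_lower_bound_general m lam hm hlam C hC
    ((satisfiesPoincare_temperedMeasure_iff (by linarith) hlam').2 hpoinc)
  calc 1 / (4 * 10 ^ 4 * m) * exp (m ^ 2 * (1 - lam) / 100) - m ^ 2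
      ≤ 1 / (4 * 10 ^ 4 * m) * exp (m ^ 2 * (1 - lam) / 100) := sub_le_self _ (sq_nonneg m)
    _ ≤ 1 / 288 * exp (9 / 800 * (1 - lam) * m ^ 2) := by
        gcongr
        · linarith
        · nlinarith [mul_nonneg (sub_nonneg.2 hlam.2) (sq_nonneg m)]
    _ ≤ C := by linarith
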